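/- For every c < 1/4 and every ε > 0, there exist arbitrarily large n and an n-vertex graph G with at least c n^2 edges such that every edge of G lies in at least one triangle, but no edge of G lies in more than n^ε triangles. In particular, h(n,c) = n^{o(1)} for every fixed c < 1/4. -/

import Mathlib

/-!
Take `x` and `y` in the lattice box `[0, r) ^ d` and join them when `|x - y|²` is within `d` of a
suitable `m`. For fixed `r` and large `d` the law of large numbers makes almost all pairs adjacent.
Cover each edge `xy` by the triangle `x, y, x + y`, whose third vertex lies in a new part. If
`x, y, z` is any triangle, then `z = x + y' = x' + y` where `|x - y'|²` and `|x' - y|²` are also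
close to `m`, so the parallelogram law gives `|x + y - z|² ≤ 2d`. The `ℓ¹`-ball of radius `2d`
contains at most `12 ^ d` lattice points, and any two of `x, y, z` together with `x + y - z`
determine the third, so each edge lies in at most `12 ^ d` triangles.

Replacing each vertex of the first two parts by `d * 2 ^ d` copies makes the third part negligible,
so the edge density tends to `1 / 4`, while the number `n` of vertices is at least `r ^ d` and each
edge lies in at most `d * 24 ^ d ≤ 48 ^ d` triangles. This is at most `n ^ ε` once `48 ≤ r ^ ε`.
-/

namespace ErdosRothschild

open MeasureTheory ProbabilityTheory SimpleGraph SimpleGraph.TripartiteFromTriangles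
open TripartiteFromTriangles.Graph
open Sum3 (in₀ in₁ in₂)

section ThinlyTriangulated

variable {V W : Type*}

/-- Every edge of `G` lies in at least one and at most `M` triangles. The third vertices of the
triangles through `uv` are the common neighbours of `u` and `v`. -/
def IsThinlyTriangulated (G : SimpleGraph V) (M : ℕ) : Prop :=
  ∀ ⦃u v⦄, G.Adj u v → (G.commonNeighbors u v).ncard ∈ Set.Icc 1 M

lemma IsThinlyTriangulated.mono {G : SimpleGraph V} {M N : ℕ} (hG : IsThinlyTriangulated G M)
    (hMN : M ≤ N) : IsThinlyTriangulated G N :=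
  fun _ _ h => Set.Icc_subset_Icc_right hMN (hG h)

lemma ncard_preimage_le_mul [Finite V] {f : V → W} {s : Set W} (hs : s.Finite) {t : ℕ}
    (hf : ∀ w ∈ s, (f ⁻¹' {w}).ncard ≤ t) : (f ⁻¹' s).ncard ≤ t * s.ncard := by
  classical
  have := Fintype.ofFinite V
  rw [Set.ncard_eq_toFinset_card', Set.ncard_eq_toFinset_card s hs]
  refine Finset.card_le_mul_card_image_of_maps_to (f := f) (by simp) t fun w hw => ?_
  refine le_trans ?_ (hf w (hs.mem_toFinset.1 hw))
  rw [← Set.ncard_coe_finset]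
  exact Set.ncard_le_ncard (by intro; simp)

lemma commonNeighbors_comap (G : SimpleGraph W) (f : V → W) (u v : V) :
    (G.comap f).commonNeighbors u v = f ⁻¹' G.commonNeighbors (f u) (f v) := rfl

lemma IsThinlyTriangulated.comap [Finite V] {G : SimpleGraph W} {M t : ℕ}
    (hG : IsThinlyTriangulated G M) {f : V → W} (hsurj : f.Surjective)
    (hf : ∀ w, (f ⁻¹' {w}).ncard ≤ t) : IsThinlyTriangulated (G.comap f) (t * M) := by
  intro u v huv
  have := Finite.of_surjective f hsurj
  obtain ⟨hpos, hle⟩ := hG huv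
  rw [commonNeighbors_comap]
  constructor
  · exact (Set.ncard_pos).2 (((Set.ncard_pos).1 hpos).preimage hsurj)
  · exact (ncard_preimage_le_mul (Set.toFinite _) fun w _ => hf w).trans (by gcongr)

lemma IsThinlyTriangulated.overFin [Fintype V] {G : SimpleGraph V} {M n : ℕ}
    (hG : IsThinlyTriangulated G M) (hn : Fintype.card V = n) :
    IsThinlyTriangulated (G.overFin hn) M := by
  let e := Fintype.equivFinOfCardEq hn
  have hfibre (v : V) : (e.symm ⁻¹' {v}).ncard ≤ 1 := by
    rw [Set.ncard_preimage_of_injective_subset_range e.symm.injective (by simp),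
      Set.ncard_singleton]
  have hG' : IsThinlyTriangulated (G.overFin hn) (1 * M) := hG.comap e.symm.surjective hfibre
  rwa [one_mul] at hG'

lemma ncard_edgeSet_overFin [Fintype V] (G : SimpleGraph V) {n : ℕ} (hn : Fintype.card V = n) :
    (G.overFin hn).edgeSet.ncard = G.edgeSet.ncard :=
  (Set.ncard_congr' (G.overFinIso hn).mapEdgeSet).symm

end ThinlyTriangulated

section Tripartite

variable {α β γ : Type*}

lemma ncard_le_of_subset_image {X V D : Type*} {N : Set V} {S : Set D} {e : X → V} {g : X → D}
    (hg : g.Injective) (hS : S.Finite) (hN : N ⊆ e '' (g ⁻¹' S)) : N.ncard ≤ S.ncard := by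
  have hfin : (g ⁻¹' S).Finite := hS.preimage hg.injOn
  calc N.ncard ≤ (e '' (g ⁻¹' S)).ncard := Set.ncard_le_ncard hN (hfin.image e)
    _ ≤ (g ⁻¹' S).ncard := Set.ncard_image_le hfin
    _ ≤ S.ncard := Set.ncard_le_ncard_of_injOn g (fun _ h => h) hg.injOn hS

lemma forall_adj_graph_of_mem {t : Finset (α × β × γ)} {P : α ⊕ β ⊕ γ → α ⊕ β ⊕ γ → Prop}
    (hP : ∀ u v, P u v → P v u)
    (h : ∀ a b c, (a, b, c) ∈ t →
      P (in₀ a) (in₁ b) ∧ P (in₀ a) (in₂ c) ∧ P (in₁ b) (in₂ c)) ⦃u v : α ⊕ β ⊕ γ⦄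
    (huv : (graph t).Adj u v) : P u v := by
  rcases huv with h' | h' | h' | h' | h' | h'
  · exact (h _ _ _ h').1
  · exact hP _ _ (h _ _ _ h').1
  · exact (h _ _ _ h').2.1
  · exact hP _ _ (h _ _ _ h').2.1
  · exact (h _ _ _ h').2.2
  · exact hP _ _ (h _ _ _ h').2.2

lemma isThinlyTriangulated_graph_of_injective [Finite α] [Finite β] [Finite γ] {D : Type*}
    {t : Finset (α × β × γ)} {S : Set D} (hS : S.Finite) {φ : α → β → γ → D}
    (hφ₀ : ∀ b c, (φ · b c).Injective) (hφ₁ : ∀ a c, (φ a · c).Injective)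
    (hφ₂ : ∀ a b, (φ a b).Injective)
    (hφS : ∀ a b c, (graph t).Adj (in₀ a) (in₁ b) → (graph t).Adj (in₀ a) (in₂ c) →
      (graph t).Adj (in₁ b) (in₂ c) → φ a b c ∈ S) :
    IsThinlyTriangulated (graph t) S.ncard := by
  refine forall_adj_graph_of_mem (fun u v h => by rwa [commonNeighbors_symm]) ?_
  intro a b c habc
  have hab : (graph t).Adj (in₀ a) (in₁ b) := .in₀₁ habc
  have hac : (graph t).Adj (in₀ a) (in₂ c) := .in₀₂ habc
  have hbc : (graph t).Adj (in₁ b) (in₂ c) := .in₁₂ habc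
  refine ⟨⟨(Set.ncard_pos).2 ⟨in₂ c, hac, hbc⟩, ?_⟩,
    ⟨(Set.ncard_pos).2 ⟨in₁ b, hab, hbc.symm⟩, ?_⟩,
    ⟨(Set.ncard_pos).2 ⟨in₀ a, hab.symm, hac.symm⟩, ?_⟩⟩
  · refine ncard_le_of_subset_image (e := in₂) (hφ₂ a b) hS ?_
    rintro (a' | b' | c') ⟨hac', hbc'⟩
    · exact (not_in₀₀ hac').elim
    · exact (not_in₁₁ hbc').elim
    · exact ⟨c', hφS a b c' hab hac' hbc', rfl⟩
  · refine ncard_le_of_subset_image (e := in₁) (hφ₁ a c) hS ?_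
    rintro (a' | b' | c') ⟨hab', hcb'⟩
    · exact (not_in₀₀ hab').elim
    · exact ⟨b', hφS a b' c hab' hac hcb'.symm, rfl⟩
    · exact (not_in₂₂ hcb').elim
  · refine ncard_le_of_subset_image (e := in₀) (hφ₀ b c) hS ?_
    rintro (a' | b' | c') ⟨hba', hca'⟩
    · exact ⟨a', hφS a' b c hba'.symm hca'.symm hbc, rfl⟩
    · exact (not_in₁₁ hba').elim
    · exact (not_in₂₂ hca').elim

/-- The blow-up of a tripartite graph in which each vertex of the first two parts is replaced by
`T` independent copies and the third part is kept. -/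
def blowup (G : SimpleGraph (α ⊕ β ⊕ γ)) (T : Type*) : SimpleGraph ((α × T) ⊕ (β × T) ⊕ γ) :=
  G.comap (Sum.map Prod.fst (Sum.map Prod.fst id))

lemma IsThinlyTriangulated.blowup [Finite α] [Finite β] [Finite γ] {T : Type*} [Finite T]
    [Nonempty T] {G : SimpleGraph (α ⊕ β ⊕ γ)} {M : ℕ} (hG : IsThinlyTriangulated G M) :
    IsThinlyTriangulated (blowup G T) (Nat.card T * M) := by
  refine hG.comap (Prod.fst_surjective.sumMap (Prod.fst_surjective.sumMap Function.surjective_id))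
    ?_
  intro v
  let copyIndex : (α × T) ⊕ (β × T) ⊕ γ → T :=
    Sum.elim Prod.snd (Sum.elim Prod.snd fun _ => Classical.arbitrary T)
  rw [← Set.ncard_univ]
  refine Set.ncard_le_ncard_of_injOn copyIndex (fun _ _ => Set.mem_univ _) ?_
  rintro (⟨a, s⟩ | ⟨b, s⟩ | c) rfl (⟨a', s'⟩ | ⟨b', s'⟩ | c') hv hs <;> simp_all [copyIndex]

lemma ncard_mul_le_ncard_edgeSet_blowup [Finite α] [Finite β] [Finite γ] {T : Type*} [Finite T]
    (G : SimpleGraph (α ⊕ β ⊕ γ)) :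
    {p : α × β | G.Adj (in₀ p.1) (in₁ p.2)}.ncard * Nat.card T ^ 2 ≤
      (blowup G T).edgeSet.ncard := by
  rw [show Nat.card T ^ 2 = (Set.univ : Set (T × T)).ncard by
    rw [Set.ncard_univ, Nat.card_prod, sq], ← Set.ncard_prod]
  refine Set.ncard_le_ncard_of_injOn (fun q => s(in₀ (q.1.1, q.2.1), in₁ (q.1.2, q.2.2))) ?_ ?_
  · rintro ⟨⟨a, b⟩, s, t⟩ ⟨h, -⟩
    exact h
  · rintro ⟨⟨a, b⟩, s, t⟩ - ⟨⟨a', b'⟩, s', t'⟩ - h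
    simp_all

end Tripartite

section Concentration

variable {ι B : Type*} [Fintype ι]

lemma measureReal_pi_abs_sum_sub_ge_le {mB : MeasurableSpace B} {P : Measure B}
    [IsProbabilityMeasure P] {f : B → ℝ} (hf : AEMeasurable f P) {a b : ℝ}
    (hab : ∀ᵐ x ∂P, f x ∈ Set.Icc a b) {δ : ℝ} (hδ : 0 < δ) :
    (Measure.pi fun _ : ι => P).real {p | δ ≤ |∑ i, f (p i) - Fintype.card ι * ∫ x, f x ∂P|} ≤
      Fintype.card ι * ((b - a) / 2) ^ 2 / δ ^ 2 := by
  set Q := Measure.pi fun _ : ι => P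
  have hL2 : MemLp f 2 P := memLp_of_bounded hab hf.aestronglyMeasurable 2
  have hL2_eval (i : ι) : MemLp (fun p : ι → B => f (p i)) 2 Q :=
    hL2.comp_measurePreserving (measurePreserving_eval _ i)
  have hmean : Q[fun p => ∑ i, f (p i)] = Fintype.card ι * ∫ x, f x ∂P := by
    rw [integral_finsetSum _ fun i _ => (hL2_eval i).integrable (by norm_num)]
    simp [Q, integral_comp_eval (μ := fun _ : ι => P) hf.aestronglyMeasurable]
  have hvar : Var[fun p => ∑ i, f (p i); Q] ≤ Fintype.card ι * ((b - a) / 2) ^ 2 := by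
    calc Var[fun p => ∑ i, f (p i); Q] = ∑ _i : ι, Var[f; P] := by
          simpa only [Finset.sum_fn] using variance_sum_pi (μ := fun _ : ι => P) fun _ => hL2
      _ ≤ ∑ _i : ι, ((b - a) / 2) ^ 2 :=
          Finset.sum_le_sum fun _ _ => variance_le_sq_of_bounded hab hf
      _ = Fintype.card ι * ((b - a) / 2) ^ 2 := by simp
  have hchebyshev :=
    meas_ge_le_variance_div_sq (memLp_finsetSum Finset.univ fun i _ => hL2_eval i) hδ
  rw [hmean] at hchebyshev
  calc _ ≤ Var[fun p => ∑ i, f (p i); Q] / δ ^ 2 :=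
        ENNReal.toReal_le_of_le_ofReal (div_nonneg (variance_nonneg _ _) (sq_nonneg _)) hchebyshev
    _ ≤ Fintype.card ι * ((b - a) / 2) ^ 2 / δ ^ 2 := by gcongr

lemma uniformOn_univ_real [Finite B] [MeasurableSpace B] [MeasurableSingletonClass B]
    (s : Set B) : (uniformOn (Set.univ : Set B)).real s = s.ncard / Nat.card B := by
  have := Fintype.ofFinite B
  rw [measureReal_def, uniformOn_univ, ENNReal.toReal_div, Measure.count_apply_finite _ s.toFinite,
    Set.ncard_eq_toFinset_card, Nat.card_eq_fintype_card, ENNReal.toReal_natCast,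
    ENNReal.toReal_natCast]

lemma exists_le_ncard_abs_sum_sub_le [Finite B] [Nonempty B] {f : B → ℝ} {a b : ℝ}
    (hab : ∀ x, f x ∈ Set.Icc a b) {δ : ℝ} (hδ : 0 < δ) :
    ∃ m : ℝ, (1 - Fintype.card ι * ((b - a) / 2) ^ 2 / δ ^ 2) * Nat.card (ι → B) ≤
      {p : ι → B | |∑ i, f (p i) - m| ≤ δ}.ncard := by
  let _ : MeasurableSpace B := ⊤
  let P : Measure B := uniformOn Set.univ
  let m := Fintype.card ι * ∫ x, f x ∂P
  let far : Set (ι → B) := {p | δ ≤ |∑ i, f (p i) - m|}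
  have hfar : (uniformOn Set.univ).real far ≤ Fintype.card ι * ((b - a) / 2) ^ 2 / δ ^ 2 := by
    rw [← Set.pi_univ Set.univ, uniformOn_pi]
    exact measureReal_pi_abs_sum_sub_ge_le measurable_from_top.aemeasurable (.of_forall hab) hδ
  have hnear : farᶜ ⊆ {p | |∑ i, f (p i) - m| ≤ δ} := fun p hp => by
    simp only [far, Set.mem_compl_iff, Set.mem_ofPred_eq, not_le] at hp ⊢
    exact hp.le
  refine ⟨m, ?_⟩
  rw [← le_div_iff₀ (Nat.cast_pos.2 Nat.card_pos)]
  calc 1 - Fintype.card ι * ((b - a) / 2) ^ 2 / δ ^ 2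
      ≤ 1 - (uniformOn (Set.univ : Set (ι → B))).real far := by gcongr
    _ = (farᶜ.ncard : ℝ) / Nat.card (ι → B) := by
        rw [← probReal_compl_eq_one_sub far.toFinite.measurableSet, uniformOn_univ_real]
    _ ≤ {p : ι → B | |∑ i, f (p i) - m| ≤ δ}.ncard / Nat.card (ι → B) := by
        gcongr
        exact Set.toFinite _

end Concentration

section LatticeBall

variable {ι : Type*} [Fintype ι]

lemma sum_Icc_half_pow_natAbs_le (N : ℕ) :
    ∑ k ∈ Finset.Icc (-N : ℤ) N, (1 / 2 : ℝ) ^ k.natAbs ≤ 3 := by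
  rw [Finset.sum_Icc_of_even_eq_range fun k => by rw [Int.natAbs_neg]]
  have := sum_geometric_two_le (N + 1)
  simp only [Int.natAbs_natCast, Int.natAbs_zero, nsmul_eq_mul]
  push_cast
  linarith

lemma natAbs_le_of_sum_natAbs_le {v : ι → ℤ} {m : ℕ} (hv : ∑ i, (v i).natAbs ≤ m) (i : ι) :
    (v i).natAbs ≤ m :=
  (Finset.single_le_sum_of_canonicallyOrdered (f := fun i => (v i).natAbs)
    (Finset.mem_univ i)).trans hv

variable (ι) in
lemma finite_sum_natAbs_le (m : ℕ) : {v : ι → ℤ | ∑ i, (v i).natAbs ≤ m}.Finite :=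
  (Set.Finite.pi' fun _ => Set.finite_Icc (-m : ℤ) m).subset fun v hv i => by
    have := natAbs_le_of_sum_natAbs_le hv i
    grind

variable (ι) in
lemma ncard_sum_natAbs_le (m : ℕ) :
    {v : ι → ℤ | ∑ i, (v i).natAbs ≤ m}.ncard ≤ 3 ^ Fintype.card ι * 2 ^ m := by
  classical
  -- Weigh `v` by `(1 / 2) ^ ∑ i, |v i|`. Each point of the ball weighs at least `(1 / 2) ^ m`, and
  -- the total weight factors over the coordinates, each contributing at most `3`.
  have hfin := finite_sum_natAbs_le ι m
  rw [Set.ncard_eq_toFinset_card _ hfin]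
  set S := hfin.toFinset
  let box : Finset (ι → ℤ) := Fintype.piFinset fun _ => Finset.Icc (-m) m
  have hS : S ⊆ box := fun v hv => by
    simp only [box, Fintype.mem_piFinset, Finset.mem_Icc]
    have := natAbs_le_of_sum_natAbs_le (hfin.mem_toFinset.1 hv)
    grind
  have hweight : (S.card : ℝ) * (1 / 2) ^ m ≤ 3 ^ Fintype.card ι := by
    calc (S.card : ℝ) * (1 / 2) ^ m = ∑ _v ∈ S, (1 / 2 : ℝ) ^ m := by simp
      _ ≤ ∑ v ∈ S, (1 / 2 : ℝ) ^ ∑ i, (v i).natAbs := Finset.sum_le_sum fun v hv =>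
          pow_le_pow_of_le_one (by norm_num) (by norm_num) (hfin.mem_toFinset.1 hv)
      _ ≤ ∑ v ∈ box, (1 / 2 : ℝ) ^ ∑ i, (v i).natAbs :=
          Finset.sum_le_sum_of_subset_of_nonneg hS fun _ _ _ => by positivity
      _ = ∏ _i : ι, ∑ k ∈ Finset.Icc (-m : ℤ) m, (1 / 2 : ℝ) ^ k.natAbs := by
          simp only [← Finset.prod_pow_eq_pow_sum, box]
          exact Finset.sum_prod_piFinset _ fun _ (k : ℤ) => (1 / 2 : ℝ) ^ k.natAbs
      _ ≤ ∏ _i : ι, 3 := Finset.prod_le_prod (fun _ _ => by positivity)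
          fun _ _ => sum_Icc_half_pow_natAbs_le m
      _ = 3 ^ Fintype.card ι := by simp
  rw [one_div, inv_pow, ← div_eq_mul_inv, div_le_iff₀ (by positivity)] at hweight
  exact_mod_cast hweight

lemma sum_natAbs_le_sum_sq (v : ι → ℤ) : ((∑ i, (v i).natAbs : ℕ) : ℤ) ≤ ∑ i, v i ^ 2 := by
  push_cast
  exact Finset.sum_le_sum fun i _ => by rw [← sq_abs]; exact Int.le_self_sq _

end LatticeBall

section Shell

variable {ι : Type*} [Fintype ι] {r : ℕ}

/-- The squared Euclidean distance between two points of the box `[0, r)^ι`. -/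
def sqDist (x y : ι → Fin r) : ℝ := ∑ i, ((x i : ℝ) - y i) ^ 2

open Classical in
/-- The triples `(x, y, x + y)` of lattice points for which `x` and `y` are at squared distance
within `δ` of `m`. The sum is placed in the box `[0, 2r)^ι`, which contains all such sums. -/
noncomputable def shellTriples (ι : Type*) [Fintype ι] (r : ℕ) (m δ : ℝ) :
    Finset ((ι → Fin r) × (ι → Fin r) × (ι → Fin (2 * r))) :=
  {p | |sqDist p.1 p.2.1 - m| ≤ δ ∧ ∀ i, (p.2.2 i : ℕ) = p.1 i + p.2.1 i}

variable {m δ : ℝ} {x y x' y' : ι → Fin r} {z : ι → Fin (2 * r)}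

lemma mem_shellTriples : (x, y, z) ∈ shellTriples ι r m δ ↔
    |sqDist x y - m| ≤ δ ∧ ∀ i, (z i : ℕ) = x i + y i := by
  simp [shellTriples]

lemma adj_graph_shellTriples_iff :
    (graph (shellTriples ι r m δ)).Adj (in₀ x) (in₁ y) ↔ |sqDist x y - m| ≤ δ := by
  simp only [in₀₁_iff, mem_shellTriples]
  exact ⟨fun ⟨_, h, _⟩ => h, fun h => ⟨fun i => ⟨x i + y i, by omega⟩, h, fun _ => rfl⟩⟩

/-- The parallelogram law for the vectors `x - y'` and `x' - y`. -/
lemma two_mul_sum_sq_add_sub_eq (hxy' : ∀ i, (z i : ℕ) = x i + y' i)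
    (hx'y : ∀ i, (z i : ℕ) = x' i + y i) :
    2 * ∑ i, ((x i : ℝ) + y i - z i) ^ 2 = sqDist x y' + sqDist x' y - 2 * sqDist x y := by
  simp only [sqDist, Finset.mul_sum, ← Finset.sum_add_distrib, ← Finset.sum_sub_distrib]
  refine Finset.sum_congr rfl fun i _ => ?_
  have h : (z i : ℝ) = x i + y' i := mod_cast hxy' i
  have h' : (z i : ℝ) = x' i + y i := mod_cast hx'y i
  rw [eq_sub_of_add_eq' h.symm, eq_sub_of_add_eq h'.symm]
  ring

lemma sum_sq_add_sub_le (hxy : (graph (shellTriples ι r m δ)).Adj (in₀ x) (in₁ y))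
    (hxz : (graph (shellTriples ι r m δ)).Adj (in₀ x) (in₂ z))
    (hyz : (graph (shellTriples ι r m δ)).Adj (in₁ y) (in₂ z)) :
    ∑ i, ((x i : ℝ) + y i - z i) ^ 2 ≤ 2 * δ := by
  obtain ⟨y', hy'⟩ := in₀₂_iff.1 hxz
  obtain ⟨x', hx'⟩ := in₁₂_iff.1 hyz
  rw [adj_graph_shellTriples_iff] at hxy
  rw [mem_shellTriples] at hx' hy'
  have hpar := two_mul_sum_sq_add_sub_eq hy'.2 hx'.2
  linarith [(abs_le.1 hxy).1, (abs_le.1 hy'.1).2, (abs_le.1 hx'.1).2]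

lemma isThinlyTriangulated_graph_shellTriples (ι : Type*) [Fintype ι] (r : ℕ) (m : ℝ) (δ : ℕ) :
    IsThinlyTriangulated (graph (shellTriples ι r m δ)) (3 ^ Fintype.card ι * 2 ^ (2 * δ)) := by
  refine .mono (isThinlyTriangulated_graph_of_injective (finite_sum_natAbs_le ι (2 * δ))
    (φ := fun x y z i => (x i : ℤ) + y i - z i) ?_ ?_ ?_ ?_) (ncard_sum_natAbs_le ι _)
  · intro y z x x' h
    ext i
    grind [congrFun h i]
  · intro x z y y' h
    ext i
    grind [congrFun h i]
  · intro x y z z' h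
    ext i
    grind [congrFun h i]
  · intro x y z hxy hxz hyz
    have h : ∑ i, ((x i : ℤ) + y i - z i) ^ 2 ≤ 2 * δ := by
      exact_mod_cast sum_sq_add_sub_le hxy hxz hyz
    exact_mod_cast (sum_natAbs_le_sum_sq _).trans h

lemma exists_le_ncard_abs_sqDist_sub_le (ι : Type*) [Fintype ι] (hr : 0 < r) (hδ : 0 < δ) :
    ∃ m : ℝ, (1 - Fintype.card ι * (r ^ 2 / 2) ^ 2 / δ ^ 2) * ((r : ℝ) ^ Fintype.card ι) ^ 2 ≤
      {p : (ι → Fin r) × (ι → Fin r) | |sqDist p.1 p.2 - m| ≤ δ}.ncard := by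
  have : Nonempty (Fin r) := ⟨⟨0, hr⟩⟩
  have hbound (q : Fin r × Fin r) : ((q.1 : ℝ) - q.2) ^ 2 ∈ Set.Icc 0 ((r : ℝ) ^ 2) := by
    have h₁ : (q.1 : ℝ) ≤ r := mod_cast q.1.2.le
    have h₂ : (q.2 : ℝ) ≤ r := mod_cast q.2.2.le
    exact ⟨sq_nonneg _, sq_le_sq' (by linarith [(q.1 : ℕ).cast_nonneg (α := ℝ)])
      (by linarith [(q.2 : ℕ).cast_nonneg (α := ℝ)])⟩
  obtain ⟨m, hm⟩ := exists_le_ncard_abs_sum_sub_le (ι := ι) hbound hδ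
  let e := Equiv.arrowProdEquivProdArrow ι (fun _ => Fin r) (fun _ => Fin r)
  refine ⟨m, ?_⟩
  rw [← Set.ncard_preimage_of_injective_subset_range e.injective (by simp)]
  rw [sub_zero] at hm
  convert hm using 2
  · simp only [Nat.card_fun, Nat.card_eq_fintype_card, Fintype.card_prod, Fintype.card_fin]
    push_cast
    ring
  · rfl

end Shell

section Construction

open Filter Topology

lemma exists_isThinlyTriangulated {r d : ℕ} (hr : 0 < r) (hd : 0 < d) :
    ∃ G : SimpleGraph (Fin ((2 * d + 1) * (2 * r) ^ d)),
      (1 - r ^ 4 / 4 / d : ℝ) * d ^ 2 * ((2 * r) ^ d) ^ 2 ≤ G.edgeSet.ncard ∧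
      IsThinlyTriangulated G (d * 24 ^ d) := by
  obtain ⟨m, hm⟩ := exists_le_ncard_abs_sqDist_sub_le (Fin d) hr (Nat.cast_pos.2 hd : 0 < (d : ℝ))
  rw [Fintype.card_fin] at hm
  set near := {p : (Fin d → Fin r) × (Fin d → Fin r) | |sqDist p.1 p.2 - m| ≤ d}
  let T := Fin (d * 2 ^ d)
  have : Nonempty T := Fin.pos_iff_nonempty.1 (by positivity)
  let G := blowup (graph (shellTriples (Fin d) r m d)) T
  have hG : IsThinlyTriangulated G (d * 24 ^ d) := by
    convert (isThinlyTriangulated_graph_shellTriples (Fin d) r m d).blowup (T := T) using 1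
    rw [Nat.card_fin, Fintype.card_fin, pow_mul, mul_assoc, ← mul_pow, ← mul_pow]
    norm_num
  have hn : Fintype.card ((((Fin d → Fin r) × T) ⊕ ((Fin d → Fin r) × T) ⊕ (Fin d → Fin (2 * r))))
      = (2 * d + 1) * (2 * r) ^ d := by
    simp only [Fintype.card_sum, Fintype.card_prod, Fintype.card_fun, Fintype.card_fin, T, mul_pow]
    ring
  have hedges : near.ncard * (d * 2 ^ d) ^ 2 ≤ G.edgeSet.ncard := by
    have h := ncard_mul_le_ncard_edgeSet_blowup (T := T) (graph (shellTriples (Fin d) r m d))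
    simp only [adj_graph_shellTriples_iff] at h
    rwa [Nat.card_fin] at h
  refine ⟨G.overFin hn, ?_, hG.overFin hn⟩
  rw [ncard_edgeSet_overFin]
  have hd' : (d : ℝ) ≠ 0 := mod_cast hd.ne'
  calc (1 - r ^ 4 / 4 / d) * d ^ 2 * ((2 * r : ℝ) ^ d) ^ 2
      = (1 - d * (r ^ 2 / 2) ^ 2 / d ^ 2) * ((r : ℝ) ^ d) ^ 2 * (d * 2 ^ d) ^ 2 := by
        rw [mul_pow 2 (r : ℝ) d]
        field_simp
        ring
    _ ≤ (near.ncard : ℝ) * (d * 2 ^ d) ^ 2 := mul_le_mul_of_nonneg_right hm (sq_nonneg _)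
    _ ≤ (G.edgeSet.ncard : ℝ) := mod_cast hedges

lemma eventually_mul_sq_le {c : ℝ} (hc : c < 1 / 4) (R : ℝ) :
    ∀ᶠ d : ℕ in atTop, c * (2 * d + 1) ^ 2 ≤ (1 - R / d) * d ^ 2 := by
  have hlim : Tendsto (fun d : ℕ => (1 - R / d) * ((d : ℝ) / (d + 1 / 2)) ^ 2) atTop
      (𝓝 ((1 - 0) * 1 ^ 2)) :=
    ((tendsto_const_div_atTop_nhds_zero_nat R).const_sub 1).mul
      ((tendsto_natCast_div_add_atTop _).pow 2)
  filter_upwards [hlim.eventually_const_le (u := 4 * c) (by linarith)] with d hd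
  rw [div_pow, ← mul_div_assoc, le_div_iff₀ (by positivity)] at hd
  linarith

lemma exists_le_natCast_rpow {ε : ℝ} (hε : 0 < ε) (a : ℝ) : ∃ r : ℕ, 0 < r ∧ a ≤ (r : ℝ) ^ ε := by
  have hlim := (tendsto_rpow_atTop hε).comp tendsto_natCast_atTop_atTop
  exact ((eventually_gt_atTop 0).and (hlim.eventually_ge_atTop a)).exists

lemma mul_pow_le_two_mul_pow (a d : ℕ) : d * a ^ d ≤ (2 * a) ^ d := by
  rw [mul_pow]
  gcongr
  exact d.lt_two_pow_self.le

lemma pow_le_rpow_of_pow_le {a b x ε : ℝ} {d : ℕ} (ha : 0 ≤ a) (hb : 0 ≤ b) (hε : 0 ≤ ε)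
    (hab : a ≤ b ^ ε) (hbx : b ^ d ≤ x) : a ^ d ≤ x ^ ε :=
  calc a ^ d ≤ (b ^ ε) ^ d := by gcongr
    _ = (b ^ d) ^ ε := by
        rw [← Real.rpow_mul_natCast hb, mul_comm, Real.rpow_natCast_mul hb]
    _ ≤ x ^ ε := by gcongr

end Construction

end ErdosRothschild

/-- For every `c < 1/4` and `ε > 0` there are arbitrarily large `n` and `n`-vertex
graphs `G` with at least `c n²` edges in which every edge lies in at least one
triangle, but no edge lies in more than `n^ε` triangles. (Hence `h(n,c) = n^{o(1)}`
for every fixed `c < 1/4`.) -/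
theorem erdos_rothschild_booksize (c : ℝ) (hc : c < 1 / 4) (ε : ℝ) (hε : 0 < ε)
    (n₀ : ℕ) :
    ∃ n : ℕ, n₀ ≤ n ∧ ∃ G : SimpleGraph (Fin n),
      c * n ^ 2 ≤ (G.edgeSet.ncard : ℝ) ∧
      (∀ u v : Fin n, G.Adj u v →
        1 ≤ {w : Fin n | G.Adj u w ∧ G.Adj v w}.ncard ∧
        ({w : Fin n | G.Adj u w ∧ G.Adj v w}.ncard : ℝ) ≤ (n : ℝ) ^ ε) := by
  obtain ⟨r, hr, hrε⟩ := ErdosRothschild.exists_le_natCast_rpow hε 48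
  obtain ⟨d, hdc, hd⟩ := ((ErdosRothschild.eventually_mul_sq_le hc (r ^ 4 / 4)).and
    (Filter.eventually_ge_atTop (max n₀ 1))).exists
  obtain ⟨G, hedges, hG⟩ := ErdosRothschild.exists_isThinlyTriangulated hr (le_of_max_le_right hd)
  have hrn : r ^ d ≤ (2 * d + 1) * (2 * r) ^ d :=
    (Nat.pow_le_pow_left (by omega) d).trans (Nat.le_mul_of_pos_left _ (by omega))
  have hdn : d ≤ (2 * d + 1) * (2 * r) ^ d :=
    (by omega : d ≤ 2 * d + 1).trans (Nat.le_mul_of_pos_right _ (by positivity))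
  refine ⟨_, (le_of_max_le_left hd).trans hdn, G, ?_, fun u v huv => ⟨(hG huv).1, ?_⟩⟩
  · push_cast
    rw [mul_pow, ← mul_assoc]
    exact (mul_le_mul_of_nonneg_right hdc (by positivity)).trans hedges
  · calc ((G.commonNeighbors u v).ncard : ℝ) ≤ (d * 24 ^ d : ℕ) := mod_cast (hG huv).2
      _ ≤ 48 ^ d := mod_cast ErdosRothschild.mul_pow_le_two_mul_pow 24 d
      _ ≤ _ := ErdosRothschild.pow_le_rpow_of_pow_le
          (by norm_num) r.cast_nonneg hε.le hrε (mod_cast hrn)
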